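/- Let w(t) = log|(1+t)/(1−t)| for t > 0, t ≠ 1, and let τ : (0,∞) → ℂ be a smooth function with compact support contained in (0,∞). Then the Mellin transform ℳ(wτ)(ζ) = ∫₀^∞ t^{ζ−1} w(t) τ(t) dt extends to an entire function of ζ, and for all real numbers c < d and every integer l ≥ 0 one has sup { (1+|Im ζ|)^{l+1} · |(d/dζ)^l ℳ(wτ)(ζ)| : ζ ∈ ℂ, c ≤ Re ζ ≤ d } < ∞. -/

import Mathlib

open MeasureTheory
noncomputable def EE (g : ℝ → ℂ) (ζ : ℂ) : ℂ := ∫ x : ℝ, Complex.exp (ζ * x) * g x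

lemma exp_bd {M R : ℝ} {ζ : ℂ} (hM : |ζ.re| ≤ M) {x : ℝ} (hx : |x| ≤ R) :
    ‖Complex.exp (ζ * x)‖ ≤ Real.exp (M * R) := by
  rw [Complex.norm_exp]
  apply Real.exp_le_exp.2
  have : (ζ * x).re = ζ.re * x := by simp
  rw [this]
  calc ζ.re * x ≤ |ζ.re * x| := le_abs_self _
    _ = |ζ.re| * |x| := abs_mul _ _
    _ ≤ M * R := mul_le_mul hM hx (abs_nonneg _) ((abs_nonneg _).trans hM)

lemma cs_bd {g : ℝ → ℂ} (hc : HasCompactSupport g) : ∃ R : ℝ, 0 < R ∧ ∀ x, R ≤ |x| → g x = 0 := by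
  obtain ⟨R, hR⟩ := hc.isCompact.isBounded.subset_closedBall 0
  refine ⟨max R 0 + 1, by positivity, fun x hx => ?_⟩
  by_contra h
  have := hR (subset_tsupport _ h)
  simp at this
  have := le_max_left R 0
  linarith

lemma pt_bd {g : ℝ → ℂ} {M R : ℝ} {ζ : ℂ} (hM : |ζ.re| ≤ M) (hR : ∀ x, R ≤ |x| → g x = 0) (x : ℝ) :
    ‖Complex.exp (ζ * x) * g x‖ ≤ Real.exp (M * R) * ‖g x‖ := by
  rw [norm_mul]
  rcases le_total R |x| with h | h
  · simp [hR x h]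
  · gcongr
    exact exp_bd hM h

lemma EE_int {g : ℝ → ℂ} (hg : Integrable g) (hc : HasCompactSupport g) (ζ : ℂ) :
    Integrable (fun x : ℝ => Complex.exp (ζ * x) * g x) := by
  obtain ⟨R, -, hR⟩ := cs_bd hc
  refine Integrable.mono' (hg.norm.const_mul (Real.exp (|ζ.re| * R))) ?_ (.of_forall fun x => pt_bd le_rfl hR x)
  exact (Continuous.aestronglyMeasurable (by fun_prop)).mul hg.1

lemma EE_triv {g : ℝ → ℂ} (hg : Integrable g) (hc : HasCompactSupport g) (M : ℝ) :
    ∃ C : ℝ, 0 ≤ C ∧ ∀ ζ : ℂ, |ζ.re| ≤ M → ‖EE g ζ‖ ≤ C := by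
  obtain ⟨R, -, hR⟩ := cs_bd hc
  refine ⟨∫ x, Real.exp (M * R) * ‖g x‖, integral_nonneg fun x => by positivity, fun ζ hζ => ?_⟩
  exact norm_integral_le_of_norm_le (hg.norm.const_mul _) (.of_forall fun x => pt_bd hζ hR x)

lemma loc_cs {g : ℝ → ℂ} (hg : LocallyIntegrable g) (hc : HasCompactSupport g) : Integrable g :=
  (integrableOn_iff_integrable_of_support_subset (subset_tsupport g)).1 (hg.integrableOn_isCompact hc)

lemma mulx_int {g : ℝ → ℂ} (hg : Integrable g) (hc : HasCompactSupport g) {u : ℝ → ℂ} (hu : Continuous u) :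
    Integrable (fun x : ℝ => u x * g x) := by
  have h1 : LocallyIntegrable g := hg.locallyIntegrable
  have := (h1.locallyIntegrableOn Set.univ).continuousOn_mul (g := u) hu.continuousOn (isOpen_univ.isLocallyClosed)
  exact loc_cs (locallyIntegrableOn_univ.1 this) hc.mul_left

lemma EE_deriv {g : ℝ → ℂ} (hg : Integrable g) (hc : HasCompactSupport g) (ζ : ℂ) :
    HasDerivAt (EE g) (EE (fun x : ℝ => (x : ℂ) * g x) ζ) ζ := by
  have hg' := mulx_int hg hc (u := fun x => (x : ℂ)) (by fun_prop)
  have hc' : HasCompactSupport (fun x : ℝ => (x : ℂ) * g x) := hc.mul_left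
  obtain ⟨R, -, hR⟩ := cs_bd hc'
  refine (hasDerivAt_integral_of_dominated_loc_of_deriv_le (F := fun (ζ : ℂ) (x : ℝ) => Complex.exp (ζ * x) * g x)
    (F' := fun (ζ : ℂ) (x : ℝ) => Complex.exp (ζ * x) * (x * g x))
    (bound := fun x : ℝ => Real.exp ((|ζ.re| + 1) * R) * ‖(x : ℂ) * g x‖)
    (Metric.ball_mem_nhds ζ one_pos) ?_ (EE_int hg hc ζ) (EE_int hg' hc' ζ).1 ?_ (hg'.norm.const_mul _) ?_).2
  · exact .of_forall fun z => (EE_int hg hc z).1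
  · refine .of_forall fun x z hz => pt_bd ?_ hR x
    have : |(z - ζ).re| ≤ ‖z - ζ‖ := Complex.abs_re_le_norm _
    rw [Metric.mem_ball, dist_eq_norm] at hz
    have h2 : |z.re| ≤ |ζ.re| + |z.re - ζ.re| := by
      have := abs_add_le ζ.re (z.re - ζ.re); simpa using this
    simp at this
    linarith
  · refine .of_forall fun x z hz => ?_
    have h1 : HasDerivAt (fun z : ℂ => z * (x : ℂ)) x z := by simpa using (hasDerivAt_id z).mul_const (x : ℂ)
    have := (h1.cexp).mul_const (g x)
    exact this.congr_deriv (by ring)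

lemma EE_iter (l : ℕ) : ∀ {g : ℝ → ℂ} (_ : Integrable g) (_ : HasCompactSupport g),
    iteratedDeriv l (EE g) = EE (fun x : ℝ => (x : ℂ) ^ l * g x) := by
  induction l with
  | zero => intro g hg hc; simp
  | succ l ih =>
    intro g hg hc
    rw [iteratedDeriv_succ']
    have : deriv (EE g) = EE (fun x : ℝ => (x : ℂ) * g x) := by
      ext ζ; exact (EE_deriv hg hc ζ).deriv
    rw [this, ih (mulx_int hg hc (u := fun x => (x : ℂ)) (by fun_prop)) hc.mul_left]
    congr 1; ext x; ring

lemma EE_ibp {g g' : ℝ → ℂ} (hg : Continuous g) (hc : HasCompactSupport g) (hg' : Integrable g')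
    (hc' : HasCompactSupport g') (hd : ∀ x, x ≠ 0 → HasDerivAt g (g' x) x) (ζ : ℂ) :
    ζ * EE g ζ = - EE g' ζ := by
  obtain ⟨R, hR0, hR⟩ := cs_bd hc
  obtain ⟨R', hR0', hR'⟩ := cs_bd hc'
  have hgi := hg.integrable_of_hasCompactSupport hc (μ := volume)
  set r := max R R'
  have i1 := (EE_int hgi hc ζ).const_mul ζ
  have i2 := EE_int hg' hc' ζ
  have key := MeasureTheory.integral_eq_of_hasDerivAt_off_countable
    (fun x : ℝ => Complex.exp (ζ * x) * g x)
    (fun x : ℝ => ζ * (Complex.exp (ζ * x) * g x) + Complex.exp (ζ * x) * g' x) (a := -r) (b := r)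
    (s := {0}) (Set.countable_singleton _) (by fun_prop) (fun x hx => by
      have h0 : HasDerivAt (fun y : ℝ => (y : ℂ)) 1 x := Complex.ofRealCLM.hasDerivAt
      have h1 : HasDerivAt (fun y : ℝ => ζ * (y : ℂ)) ζ x := by
        simpa using h0.const_mul ζ
      exact (h1.cexp.mul (hd x hx.2)).congr_deriv (by ring)) (i1.add i2).intervalIntegrable
  have hr : R ≤ |r| := (le_max_left _ _).trans (le_abs_self _)
  have hr' : R' ≤ |r| := (le_max_right _ _).trans (le_abs_self _)
  rw [hR r hr, hR (-r) (by rwa [abs_neg])] at key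
  rw [intervalIntegral.integral_eq_integral_of_support_subset, integral_add i1 i2, integral_const_mul] at key
  · simp only [EE]; linear_combination key
  · intro x hx
    by_contra h
    have : r ≤ |x| := by
      by_contra h'
      push Not at h'
      rw [abs_lt] at h'
      exact h ⟨h'.1, h'.2.le⟩
    apply hx
    simp [hR x ((le_max_left _ _).trans this), hR' x ((le_max_right _ _).trans this)]

lemma EE_step {g g' : ℝ → ℂ} (hg : Continuous g) (hc : HasCompactSupport g) (hg' : Integrable g')
    (hc' : HasCompactSupport g') (hd : ∀ x, x ≠ 0 → HasDerivAt g (g' x) x) (ζ : ℂ) :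
    (1 + |ζ.im|) * ‖EE g ζ‖ ≤ ‖EE g ζ‖ + ‖EE g' ζ‖ := by
  have := congrArg norm (EE_ibp hg hc hg' hc' hd ζ)
  rw [norm_mul, norm_neg] at this
  have h := mul_le_mul_of_nonneg_right (Complex.abs_im_le_norm ζ) (norm_nonneg (EE g ζ))
  linarith

lemma EE_smooth (M : ℝ) (n : ℕ) : ∀ {ψ : ℝ → ℂ} (_ : ContDiff ℝ (⊤ : ℕ∞) ψ) (_ : HasCompactSupport ψ),
    ∃ C : ℝ, ∀ ζ : ℂ, |ζ.re| ≤ M → (1 + |ζ.im|) ^ n * ‖EE ψ ζ‖ ≤ C := by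
  induction n with
  | zero =>
    intro ψ h hc
    obtain ⟨C, -, hC⟩ := EE_triv (h.continuous.integrable_of_hasCompactSupport hc) hc M
    exact ⟨C, by simpa using hC⟩
  | succ n ih =>
    intro ψ h hc
    have h' : ContDiff ℝ (⊤ : ℕ∞) (deriv ψ) := (contDiff_infty_iff_deriv.1 h).2
    obtain ⟨C1, h1⟩ := ih h hc
    obtain ⟨C2, h2⟩ := ih h' hc.deriv
    refine ⟨C1 + C2, fun ζ hζ => ?_⟩
    have := EE_step h.continuous hc (h'.continuous.integrable_of_hasCompactSupport hc.deriv) hc.deriv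
      (fun x _ => ((contDiff_infty_iff_deriv.1 h).1 x).hasDerivAt) ζ
    calc _ = (1 + |ζ.im|) ^ n * ((1 + |ζ.im|) * ‖EE ψ ζ‖) := by ring
      _ ≤ (1 + |ζ.im|) ^ n * (‖EE ψ ζ‖ + ‖EE (deriv ψ) ζ‖) := by gcongr
      _ ≤ _ := by rw [mul_add]; exact add_le_add (h1 ζ hζ) (h2 ζ hζ)

lemma log_loc : LocallyIntegrable (fun x : ℝ => (Real.log x : ℂ)) := by
  rw [locallyIntegrable_iff]
  intro K hK
  obtain ⟨R, hR⟩ := hK.isBounded.subset_closedBall 0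
  rw [Real.closedBall_eq_Icc] at hR
  have h : IntegrableOn Real.log K volume := by
    rcases le_total (0 - R) (0 + R) with h | h
    · exact ((intervalIntegrable_iff_integrableOn_Icc_of_le h).1
        intervalIntegral.intervalIntegrable_log').mono_set hR
    · refine IntegrableOn.mono_set ?_ (hR.trans (Set.Icc_subset_Icc_left (a₁ := 0 + R) h))
      simp
  exact h.ofReal

lemma logmul_int {ψ : ℝ → ℂ} (h : Continuous ψ) (hc : HasCompactSupport ψ) :
    Integrable (fun x : ℝ => (Real.log x : ℂ) * ψ x) := by
  have := (log_loc.locallyIntegrableOn Set.univ).mul_continuousOn (g := ψ) h.continuousOn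
    (isOpen_univ.isLocallyClosed)
  exact loc_cs (locallyIntegrableOn_univ.1 this) hc.mul_left

lemma EE_add {f g : ℝ → ℂ} (hf : Integrable f) (hfc : HasCompactSupport f)
    (hg : Integrable g) (hgc : HasCompactSupport g) (ζ : ℂ) :
    EE (fun x => f x + g x) ζ = EE f ζ + EE g ζ := by
  unfold EE
  rw [← integral_add (EE_int hf hfc ζ) (EE_int hg hgc ζ)]
  simp only [mul_add]

noncomputable def kk (y : ℝ) : ℝ := Real.log (y + 1) + Real.log (y - 1) - 2 * Real.log y

lemma log_Icc (a b : ℝ) : IntegrableOn Real.log (Set.Icc a b) := by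
  rcases le_total a b with h | h
  · exact (intervalIntegrable_iff_integrableOn_Icc_of_le h).1 intervalIntegral.intervalIntegrable_log'
  · rcases h.eq_or_lt with h | h
    · subst h; simp
    · simp [Set.Icc_eq_empty_of_lt h]

lemma kk_int : Integrable kk := by
  have sh : ∀ c : ℝ, IntegrableOn (fun y => Real.log (y + c)) (Set.Icc (-2) 2) := by
    intro c
    have := (intervalIntegral.intervalIntegrable_log' (a := -2 + c) (b := 2 + c)).comp_add_right c
    simp only [add_sub_cancel_right] at this
    exact (intervalIntegrable_iff_integrableOn_Icc_of_le (by norm_num)).1 this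
  have h1 : IntegrableOn kk (Set.Icc (-2) 2) := by
    have a := sh 1
    have b := sh (-1)
    have c := log_Icc (-2) 2
    exact (a.add b).sub (c.const_mul 2)
  have h2 : Integrable (fun y : ℝ => ‖(Set.Icc (-2) 2).indicator kk y‖ + 4 * (1 + y ^ 2)⁻¹) :=
    ((integrable_indicator_iff measurableSet_Icc).2 h1).norm.add (integrable_inv_one_add_sq.const_mul 4)
  refine h2.mono' ?_ (.of_forall fun y => ?_)
  · have : Measurable kk := by unfold kk; fun_prop
    exact this.aestronglyMeasurable
  · by_cases hy : y ∈ Set.Icc (-2 : ℝ) 2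
    · rw [Set.indicator_of_mem hy]
      have : 0 ≤ 4 * (1 + y ^ 2)⁻¹ := by positivity
      linarith
    · rw [Set.indicator_of_notMem hy, norm_zero, zero_add]
      have hy2 : 4 < y ^ 2 := by
        rw [Set.mem_Icc, not_and_or, not_le, not_le] at hy
        rcases hy with hy | hy <;> nlinarith
      have hy0 : y ≠ 0 := by rintro rfl; norm_num at hy2
      have n1 : y + 1 ≠ 0 := by intro h; nlinarith [show y = -1 by linarith]
      have n2 : y - 1 ≠ 0 := by intro h; nlinarith [show y = 1 by linarith]
      have e : kk y = Real.log ((y ^ 2 - 1) / y ^ 2) := by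
        rw [Real.log_div (by linarith) (by positivity), Real.log_pow, show y ^ 2 - 1 = (y + 1) * (y - 1) by ring,
          Real.log_mul n1 n2, kk]
        norm_num
      have p : 0 < (y ^ 2 - 1) / y ^ 2 := div_pos (by linarith) (by linarith)
      have u1 : kk y ≤ 0 := by
        rw [e]; apply Real.log_nonpos p.le
        rw [div_le_one (by linarith)]; linarith
      have u2 := Real.one_sub_inv_le_log_of_pos p
      rw [← e, inv_div] at u2
      rw [Real.norm_eq_abs, abs_of_nonpos u1]
      have : y ^ 2 / (y ^ 2 - 1) - 1 ≤ 4 * (1 + y ^ 2)⁻¹ := by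
        rw [← div_eq_mul_inv, div_sub_one (by linarith), div_le_div_iff₀ (by linarith) (by positivity)]
        nlinarith
      linarith

lemma second_diff {ρ : ℝ → ℂ} {B B' R η h : ℝ} (hρ : Continuous ρ) (hB : ∀ x, ‖ρ x‖ ≤ B)
    (hB' : ∀ x y, ‖ρ x - ρ y‖ ≤ B' * |x - y|) (hR0 : 0 < R) (hR : ∀ x, R ≤ |x| → ρ x = 0)
    (hh : 0 < h) (hh1 : h ≤ 1)
    (he1 : Complex.exp (Complex.I * η * h) = -1) :
    4 * ‖∫ x : ℝ, Complex.exp (Complex.I * η * x) * ((Real.log x : ℂ) * ρ x)‖ ≤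
      h * (B * (∫ x, |kk x|) + 2 * B' * ∫ x in Set.Icc (-(R+2)) (R+2), |Real.log x|) := by
  have B0 : 0 ≤ B := (norm_nonneg _).trans (hB 0)
  have B0' : 0 ≤ B' := by simpa using (norm_nonneg _).trans (hB' 1 0)
  have hc : HasCompactSupport ρ := by
    refine HasCompactSupport.intro (K := Metric.closedBall 0 R) (isCompact_closedBall 0 R) fun x hx => hR x ?_
    simp at hx; exact hx.le
  have he2 : Complex.exp (-(Complex.I * η * h)) = -1 := by rw [Complex.exp_neg, he1]; norm_num
  set e : ℝ → ℂ := fun x => Complex.exp (Complex.I * η * x) with hedef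
  have ep : ∀ x, e (x + h) = - e x := by
    intro x; simp only [hedef]; push_cast; rw [mul_add, Complex.exp_add, he1]; ring
  have em : ∀ x, e (x - h) = - e x := by
    intro x; simp only [hedef]; push_cast; rw [mul_sub, sub_eq_add_neg, Complex.exp_add, he2]; ring
  have en : ∀ x, ‖e x‖ = 1 := by
    intro x; simp [hedef, Complex.norm_exp]
  set G : ℝ → ℂ := fun x => (Real.log x : ℂ) * ρ x with hG
  have iG : Integrable G := logmul_int hρ hc
  have i0 : Integrable (fun x => e x * G x) := EE_int iG hc.mul_left (Complex.I * η)
  have t1 : ∀ x, e x * G (x + h) = - ((fun y => e y * G y) (x + h)) := by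
    intro x; simp only [ep]; ring
  have t2 : ∀ x, e x * G (x - h) = - ((fun y => e y * G y) (x - h)) := by
    intro x; simp only [em]; ring
  have i1 : Integrable (fun x => e x * G (x + h)) := by
    simp only [t1]; exact (i0.comp_add_right h).neg
  have i2 : Integrable (fun x => e x * G (x - h)) := by
    simp only [t2]; exact (i0.comp_sub_right h).neg
  have v1 : ∫ x, e x * G (x + h) = - ∫ x, e x * G x := by
    simp only [t1]; rw [integral_neg, integral_add_right_eq_self (fun y => e y * G y)]
  have v2 : ∫ x, e x * G (x - h) = - ∫ x, e x * G x := by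
    simp only [t2]; rw [integral_neg, integral_sub_right_eq_self (fun y => e y * G y)]
  have tot : ∫ x, (e x * G (x + h) + e x * G (x - h) - 2 * (e x * G x)) = -4 * ∫ x, e x * G x := by
    have i12 : Integrable (fun x => e x * G (x + h) + e x * G (x - h)) := i1.add i2
    rw [integral_sub i12 (i0.const_mul 2), integral_add i1 i2, v1, v2, integral_const_mul]; ring
  set m : ℝ → ℝ := (Set.Icc (-(R+2)) (R+2)).indicator (fun x => |Real.log x|) with hm
  have im : Integrable m := (integrable_indicator_iff measurableSet_Icc).2 (log_Icc _ _).abs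
  have vm : ∫ x, m x = ∫ x in Set.Icc (-(R+2)) (R+2), |Real.log x| := integral_indicator measurableSet_Icc
  have ik : Integrable (fun x => |kk (x / h)|) := (kk_int.comp_div hh.ne').abs
  have vk : ∫ x, |kk (x / h)| = h * ∫ x, |kk x| := by
    have := Measure.integral_comp_div (fun x => |kk x|) h
    rw [this, abs_of_pos hh, smul_eq_mul]
  have bd : Integrable (fun x => B * |kk (x / h)| + (B' * h) * (m (x + h) + m (x - h))) :=
    (ik.const_mul B).add (((im.comp_add_right h).add (im.comp_sub_right h)).const_mul _)
  have vb : ∫ x, (B * |kk (x / h)| + (B' * h) * (m (x + h) + m (x - h))) =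
      h * (B * (∫ x, |kk x|) + 2 * B' * ∫ x in Set.Icc (-(R+2)) (R+2), |Real.log x|) := by
    have imm : Integrable (fun x => m (x + h) + m (x - h)) := (im.comp_add_right h).add (im.comp_sub_right h)
    rw [integral_add (ik.const_mul B) (imm.const_mul _),
      integral_const_mul, integral_const_mul, integral_add (im.comp_add_right h) (im.comp_sub_right h),
      integral_add_right_eq_self m, integral_sub_right_eq_self m, vk, vm]
    ring
  have piece : ∀ x s : ℝ, |s| = h → ‖(Real.log (x + s) : ℂ) * (ρ (x + s) - ρ x)‖ ≤ (B' * h) * m (x + s) := by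
    intro x s hs
    have m0 : 0 ≤ m (x + s) := Set.indicator_nonneg (fun _ _ => abs_nonneg _) _
    by_cases hx : |x| < R + 1
    · have hmem : x + s ∈ Set.Icc (-(R+2)) (R+2) := by
        have := abs_add_le x s
        rw [Set.mem_Icc, ← abs_le]; linarith
      rw [hm, Set.indicator_of_mem hmem, norm_mul, Complex.norm_real, Real.norm_eq_abs, mul_comm]
      have := hB' (x + s) x
      rw [add_sub_cancel_left, hs] at this
      gcongr
    · push Not at hx
      rw [hR x (by linarith), hR (x + s)]
      · simp; positivity
      · have := abs_sub_abs_le_abs_sub x (-s)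
        rw [abs_neg, sub_neg_eq_add] at this
        linarith
  have pt : ∀ᵐ x : ℝ, ‖e x * G (x + h) + e x * G (x - h) - 2 * (e x * G x)‖ ≤
      B * |kk (x / h)| + (B' * h) * (m (x + h) + m (x - h)) := by
    have n0 : ∀ᵐ x : ℝ, x ≠ 0 := by simp [ae_iff]
    have n1 : ∀ᵐ x : ℝ, x ≠ h := by simp [ae_iff]
    have n2 : ∀ᵐ x : ℝ, x ≠ -h := by simp [ae_iff]
    filter_upwards [n0, n1, n2] with x h0 h1 h2
    have k1 : kk (x / h) = Real.log (x + h) + Real.log (x - h) - 2 * Real.log x := by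
      have a1 : x + h ≠ 0 := fun h' => h2 (by linarith)
      have a2 : x - h ≠ 0 := sub_ne_zero.2 h1
      rw [kk, show x / h + 1 = (x + h) / h by field_simp, show x / h - 1 = (x - h) / h by field_simp,
        Real.log_div a1 hh.ne', Real.log_div a2 hh.ne', Real.log_div h0 hh.ne']
      ring
    have eq : e x * G (x + h) + e x * G (x - h) - 2 * (e x * G x) =
      e x * ((kk (x / h) : ℂ) * ρ x + ((Real.log (x + h) : ℂ) * (ρ (x + h) - ρ x) +
        (Real.log (x + -h) : ℂ) * (ρ (x + -h) - ρ x))) := by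
      rw [k1, ← sub_eq_add_neg]; simp only [hG]; push_cast; ring
    rw [eq, norm_mul, en, one_mul]
    have p1 := piece x h (abs_of_pos hh)
    have p2 := piece x (-h) (by rw [abs_neg, abs_of_pos hh])
    have p0 : ‖(kk (x / h) : ℂ) * ρ x‖ ≤ B * |kk (x / h)| := by
      rw [norm_mul, Complex.norm_real, Real.norm_eq_abs, mul_comm]
      exact mul_le_mul_of_nonneg_right (hB x) (abs_nonneg _)
    refine (norm_add_le _ _).trans (add_le_add p0 ((norm_add_le _ _).trans ?_))
    rw [mul_add, sub_eq_add_neg x h]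
    exact add_le_add p1 p2
  have fin := norm_integral_le_of_norm_le bd pt
  rw [tot, vb, norm_mul] at fin
  simpa using fin

lemma EE_base (M : ℝ) {ψ : ℝ → ℂ} (h : ContDiff ℝ (⊤ : ℕ∞) ψ) (hc : HasCompactSupport ψ) :
    ∃ C : ℝ, ∀ ζ : ℂ, |ζ.re| ≤ M → (1 + |ζ.im|) * ‖EE (fun x : ℝ => (Real.log x : ℂ) * ψ x) ζ‖ ≤ C := by
  have h' : ContDiff ℝ (⊤ : ℕ∞) (deriv ψ) := (contDiff_infty_iff_deriv.1 h).2
  obtain ⟨R1, R10, hR1⟩ := cs_bd hc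
  obtain ⟨R2, R20, hR2⟩ := cs_bd hc.deriv
  obtain ⟨b0, hb0⟩ := h.continuous.bounded_above_of_compact_support hc
  obtain ⟨b1, hb1⟩ := h'.continuous.bounded_above_of_compact_support hc.deriv
  obtain ⟨C0, C00, hC0⟩ := EE_triv (logmul_int h.continuous hc) hc.mul_left M
  set R := max R1 R2
  have hR : ∀ x, R ≤ |x| → ψ x = 0 := fun x hx => hR1 x ((le_max_left _ _).trans hx)
  have hR' : ∀ x, R ≤ |x| → deriv ψ x = 0 := fun x hx => hR2 x ((le_max_right _ _).trans hx)
  have R0 : 0 < R := lt_max_of_lt_left R10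
  have b00 : 0 ≤ b0 := (norm_nonneg _).trans (hb0 0)
  have b10 : 0 ≤ b1 := (norm_nonneg _).trans (hb1 0)
  set B := Real.exp (M * R) * b0 with hBd
  set B' := Real.exp (M * R) * (M * b0 + b1) with hBd'
  set Q := B * (∫ x, |kk x|) + 2 * B' * ∫ x in Set.Icc (-(R+2)) (R+2), |Real.log x| with hQ
  refine ⟨(1 + Real.pi) * C0 + 2 * Real.pi * Q, fun ζ hζ => ?_⟩
  have M0 : 0 ≤ M := (abs_nonneg _).trans hζ
  have Q0 : 0 ≤ Q := by
    have : 0 ≤ ∫ x, |kk x| := integral_nonneg fun _ => abs_nonneg _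
    have : 0 ≤ ∫ x in Set.Icc (-(R+2)) (R+2), |Real.log x| := integral_nonneg fun _ => abs_nonneg _
    positivity
  have hpi := Real.pi_pos
  rcases le_total |ζ.im| Real.pi with hs | hs
  · have : (1 + |ζ.im|) * ‖EE (fun x : ℝ => (Real.log x : ℂ) * ψ x) ζ‖ ≤ (1 + Real.pi) * C0 := by
      gcongr
      exact hC0 ζ hζ
    have : 0 ≤ 2 * Real.pi * Q := by positivity
    linarith
  set η := ζ.im with hη
  have η0 : 0 < |η| := hpi.trans_le hs
  set ρ : ℝ → ℂ := fun x => Complex.exp ((ζ.re : ℂ) * x) * ψ x with hρ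
  have re1 : |((ζ.re : ℂ)).re| ≤ M := by simpa using hζ
  have ρB : ∀ x, ‖ρ x‖ ≤ B := fun x =>
    (pt_bd re1 hR x).trans (mul_le_mul_of_nonneg_left (hb0 x) (Real.exp_pos _).le)
  have ρd : ∀ x : ℝ, HasDerivAt ρ (Complex.exp ((ζ.re : ℂ) * x) * ((ζ.re : ℂ) * ψ x + deriv ψ x)) x := by
    intro x
    have h0 : HasDerivAt (fun y : ℝ => (y : ℂ)) 1 x := Complex.ofRealCLM.hasDerivAt
    have h1 : HasDerivAt (fun y : ℝ => (ζ.re : ℂ) * (y : ℂ)) ζ.re x := by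
      simpa using h0.const_mul (ζ.re : ℂ)
    exact (h1.cexp.mul ((contDiff_infty_iff_deriv.1 h).1 x).hasDerivAt).congr_deriv (by ring)
  have ρB' : ∀ x : ℝ, ‖Complex.exp ((ζ.re : ℂ) * x) * ((ζ.re : ℂ) * ψ x + deriv ψ x)‖ ≤ B' := by
    intro x
    refine (pt_bd (R := R) (g := fun x => (ζ.re : ℂ) * ψ x + deriv ψ x) re1 (fun x hx => by simp [hR x hx, hR' x hx]) x).trans ?_
    refine mul_le_mul_of_nonneg_left ?_ (Real.exp_pos _).le
    refine (norm_add_le _ _).trans (add_le_add ?_ (hb1 x))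
    rw [norm_mul, Complex.norm_real]
    exact mul_le_mul hζ (hb0 x) (norm_nonneg _) M0
  have lip : ∀ x y, ‖ρ x - ρ y‖ ≤ B' * |x - y| := fun x y =>
    convex_univ.norm_image_sub_le_of_norm_hasDerivWithin_le (fun z _ => (ρd z).hasDerivWithinAt)
      (fun z _ => ρB' z) (Set.mem_univ y) (Set.mem_univ x)
  have hexp : Complex.exp (Complex.I * η * ((Real.pi / |η| : ℝ) : ℂ)) = -1 := by
    have hne : (η : ℂ) ≠ 0 := by exact_mod_cast abs_pos.1 η0
    rcases abs_choice η with ha | ha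
    · rw [ha]; push_cast
      rw [show Complex.I * η * (Real.pi / η) = Real.pi * Complex.I by field_simp]
      exact Complex.exp_pi_mul_I
    · rw [ha]; push_cast
      rw [show Complex.I * η * (Real.pi / -η) = -(Real.pi * Complex.I) by field_simp, Complex.exp_neg,
        Complex.exp_pi_mul_I]
      norm_num
  have main := second_diff (η := η) (h := Real.pi / |η|) (continuous_iff_continuousAt.2 fun x => (ρd x).continuousAt)
    ρB lip R0 (fun x hx => by simp [hρ, hR x hx]) (by positivity) ((div_le_one η0).2 hs) hexp
  have eqE : EE (fun x : ℝ => (Real.log x : ℂ) * ψ x) ζ =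
      ∫ x : ℝ, Complex.exp (Complex.I * η * x) * ((Real.log x : ℂ) * ρ x) := by
    unfold EE
    congr 1; ext x
    have : Complex.exp (ζ * x) = Complex.exp (Complex.I * η * x) * Complex.exp ((ζ.re : ℂ) * x) := by
      rw [← Complex.exp_add]; congr 1
      conv_lhs => rw [← Complex.re_add_im ζ]
      ring
    rw [this]; simp only [hρ]; ring
  rw [← eqE, ← hQ] at main
  set N := ‖EE (fun x : ℝ => (Real.log x : ℂ) * ψ x) ζ‖
  have m2 : |η| * N ≤ Real.pi * Q := by
    have := mul_le_mul_of_nonneg_left main η0.le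
    rw [show |η| * (Real.pi / |η| * Q) = Real.pi * Q by field_simp] at this
    have : 0 ≤ |η| * N := by positivity
    linarith
  have m3 : N ≤ C0 := hC0 ζ hζ
  have : 0 ≤ Real.pi * C0 := by positivity
  have : 0 ≤ Real.pi * Q := by positivity
  linarith

lemma EE_log (M : ℝ) (l : ℕ) : ∀ {ψ : ℝ → ℂ} (_ : ContDiff ℝ (⊤ : ℕ∞) ψ) (_ : HasCompactSupport ψ),
    ∃ C : ℝ, ∀ ζ : ℂ, |ζ.re| ≤ M →
      (1 + |ζ.im|) ^ (l + 1) * ‖EE (fun x : ℝ => (x : ℂ) ^ l * ((Real.log x : ℂ) * ψ x)) ζ‖ ≤ C := by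
  induction l with
  | zero => intro ψ h hc; simpa using EE_base M h hc
  | succ l ih =>
    intro ψ h hc
    have h' : ContDiff ℝ (⊤ : ℕ∞) (deriv ψ) := (contDiff_infty_iff_deriv.1 h).2
    have hx : ContDiff ℝ (⊤ : ℕ∞) (fun x : ℝ => (x : ℂ)) := Complex.ofRealCLM.contDiff
    have s1 : ContDiff ℝ (⊤ : ℕ∞) (fun x : ℝ => (x : ℂ) * ψ x) := hx.mul h
    have s2 : ContDiff ℝ (⊤ : ℕ∞) (fun x : ℝ => ((l : ℂ) + 1) * ψ x + (x : ℂ) * deriv ψ x) :=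
      (contDiff_const.mul h).add (hx.mul h')
    have s3 : ContDiff ℝ (⊤ : ℕ∞) (fun x : ℝ => (x : ℂ) ^ l * ψ x) := (hx.pow l).mul h
    have c1 : HasCompactSupport (fun x : ℝ => (x : ℂ) * ψ x) := hc.mul_left
    have c2 : HasCompactSupport (fun x : ℝ => ((l : ℂ) + 1) * ψ x + (x : ℂ) * deriv ψ x) :=
      (HasCompactSupport.mul_left hc).add (HasCompactSupport.mul_left hc.deriv)
    have c3 : HasCompactSupport (fun x : ℝ => (x : ℂ) ^ l * ψ x) := hc.mul_left
    obtain ⟨C1, h1⟩ := ih s1 c1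
    obtain ⟨C2, h2⟩ := ih s2 c2
    obtain ⟨C3, h3⟩ := EE_smooth M (l + 1) s3 c3
    refine ⟨C1 + (C2 + C3), fun ζ hζ => ?_⟩
    have i2 := mulx_int (logmul_int s2.continuous c2) c2.mul_left (u := fun x : ℝ => (x : ℂ) ^ l) (by fun_prop)
    have i3 := s3.continuous.integrable_of_hasCompactSupport c3 (μ := volume)
    have cc2 : HasCompactSupport (fun x : ℝ => (x : ℂ) ^ l *
      ((Real.log x : ℂ) * (((l : ℂ) + 1) * ψ x + (x : ℂ) * deriv ψ x))) :=
      HasCompactSupport.mul_left (HasCompactSupport.mul_left c2)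
    have e1 : (fun x : ℝ => (x : ℂ) ^ (l + 1) * ((Real.log x : ℂ) * ψ x)) =
        fun x : ℝ => (x : ℂ) ^ l * ((Real.log x : ℂ) * (x * ψ x)) := by ext x; ring
    have cont : Continuous (fun x : ℝ => (x : ℂ) ^ (l + 1) * ((Real.log x : ℂ) * ψ x)) := by
      have : (fun x : ℝ => (x : ℂ) ^ (l + 1) * ((Real.log x : ℂ) * ψ x)) =
        fun x : ℝ => (x : ℂ) ^ l * (((x * Real.log x : ℝ) : ℂ) * ψ x) := by
          ext x; push_cast; ring
      rw [this]
      have := Real.continuous_mul_log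
      have := h.continuous
      fun_prop
    have step := EE_step cont (HasCompactSupport.mul_left (HasCompactSupport.mul_left hc))
      (i2.add i3) (cc2.add c3) (fun x hx0 => by
        have d0 : HasDerivAt (fun y : ℝ => (y : ℂ)) 1 x := Complex.ofRealCLM.hasDerivAt
        have dl := (Real.hasDerivAt_log hx0).ofReal_comp
        have dψ := ((contDiff_infty_iff_deriv.1 h).1 x).hasDerivAt
        have := (d0.pow (l+1)).mul (dl.mul dψ)
        refine this.congr_deriv ?_
        have : (x : ℂ) ≠ 0 := by exact_mod_cast hx0
        simp
        field_simp
        ring) ζ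
    have e2 : EE ((fun x : ℝ => (x : ℂ) ^ l *
      ((Real.log x : ℂ) * (((l : ℂ) + 1) * ψ x + (x : ℂ) * deriv ψ x))) + fun x : ℝ => (x : ℂ) ^ l * ψ x) ζ
       = _ := EE_add i2 cc2 i3 c3 ζ
    rw [e2] at step
    have step2 := step.trans (add_le_add_right (norm_add_le _ _) _)
    have := mul_le_mul_of_nonneg_left step2 (show 0 ≤ (1 + |ζ.im|) ^ (l + 1) by positivity)
    have a1 := h1 ζ hζ
    rw [← e1] at a1
    have a2 := h2 ζ hζ
    have a3 := h3 ζ hζ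
    rw [pow_succ, mul_assoc]
    refine this.trans ?_
    rw [mul_add, mul_add]
    linarith

lemma q_smooth : ContDiff ℝ (⊤ : ℕ∞) (dslope Real.exp 0) := by
  rw [contDiff_iff_contDiffAt]
  intro x
  by_cases hx : x = 0
  · subst hx
    obtain ⟨p, hp⟩ : AnalyticAt ℝ Real.exp 0 := analyticAt_rexp
    have ha : AnalyticAt ℝ (dslope Real.exp 0) 0 := ⟨_, hp.has_fpower_series_dslope_fslope⟩
    exact ha.contDiffAt
  · have : (fun y : ℝ => (Real.exp y - 1) / y) =ᶠ[nhds x] dslope Real.exp 0 := by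
      filter_upwards [isOpen_ne.mem_nhds hx] with y hy
      rw [dslope_of_ne _ hy, slope_def_field]; simp
    refine ContDiffAt.congr_of_eventuallyEq ?_ this.symm
    exact (Real.contDiff_exp.contDiffAt.sub contDiffAt_const).div contDiffAt_id hx

lemma q_pos (x : ℝ) : 0 < dslope Real.exp 0 x := by
  by_cases hx : x = 0
  · subst hx; simp [dslope_same]
  · rw [dslope_of_ne _ hx, slope_def_field]
    rcases lt_or_gt_of_ne hx with h | h
    · have := Real.exp_lt_exp.2 h
      exact div_pos_of_neg_of_neg (by linarith) (by linarith)
    · have := Real.exp_lt_exp.2 h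
      exact div_pos (by linarith) (by linarith)

lemma W_eq (x : ℝ) (hx : x ≠ 0) : Real.log |(1 + Real.exp x) / (1 - Real.exp x)| =
    - Real.log x + (Real.log (1 + Real.exp x) - Real.log (dslope Real.exp 0 x)) := by
  have hq := (q_pos x).ne'
  have he : 1 - Real.exp x = - (x * dslope Real.exp 0 x) := by
    rw [dslope_of_ne _ hx, slope_def_field]; simp; field_simp; ring
  have : 1 + Real.exp x ≠ 0 := by positivity
  rw [Real.log_abs, he, Real.log_div this (by simp [hx, hq]), Real.log_neg_eq_log, Real.log_mul hx hq]
  ring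

/-- Let `w(t) = log|(1+t)/(1−t)|` and let `τ` be a smooth function with compact support
contained in `(0,∞)`. Then the Mellin transform `ℳ(wτ)(ζ) = ∫₀^∞ t^{ζ−1} w(t) τ(t) dt`
extends to an entire function `F` of `ζ`, and for all real `c < d` and every integer
`l ≥ 0` one has `sup { (1+|Im ζ|)^{l+1} |F^{(l)}(ζ)| : c ≤ Re ζ ≤ d } < ∞`. -/
theorem mellin_log_cutoff_decay (τ : ℝ → ℂ) (hτ : ContDiff ℝ (⊤ : ℕ∞) τ)
    (hτc : HasCompactSupport τ) (hτs : tsupport τ ⊆ Set.Ioi 0) :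
    ∃ F : ℂ → ℂ, Differentiable ℂ F ∧
      (∀ ζ : ℂ, F ζ =
        ∫ t in Set.Ioi (0:ℝ), (t : ℂ) ^ (ζ - 1) * (Real.log |(1 + t) / (1 - t)| : ℂ) * τ t) ∧
      ∀ (c d : ℝ), c < d → ∀ l : ℕ, ∃ C : ℝ,
        ∀ ζ : ℂ, c ≤ ζ.re → ζ.re ≤ d →
          (1 + |ζ.im|) ^ (l + 1) * ‖iteratedDeriv l F ζ‖ ≤ C := by
  set φ : ℝ → ℂ := fun x => - τ (Real.exp x) with hφ
  have sφ : ContDiff ℝ (⊤ : ℕ∞) φ := (hτ.comp Real.contDiff_exp).neg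
  have cφ : HasCompactSupport φ := by
    refine HasCompactSupport.intro (K := Real.log '' tsupport τ) ?_ ?_
    · refine hτc.isCompact.image_of_continuousOn (Real.continuousOn_log.mono ?_)
      intro x hx
      exact (hτs hx).ne'
    · intro x hx
      by_contra hne
      refine hx ⟨Real.exp x, subset_tsupport _ ?_, Real.log_exp x⟩
      simpa [φ] using hne
  set v : ℝ → ℝ := fun x => Real.log (1 + Real.exp x) - Real.log (dslope Real.exp 0 x) with hv
  have sv : ContDiff ℝ (⊤ : ℕ∞) v :=
    ((contDiff_const.add Real.contDiff_exp).log (fun x => by positivity)).sub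
      (q_smooth.log fun x => (q_pos x).ne')
  set σ : ℝ → ℂ := fun x => - (v x : ℂ) * φ x with hσ
  have sσ : ContDiff ℝ (⊤ : ℕ∞) σ := (Complex.ofRealCLM.contDiff.comp sv).neg.mul sφ
  have cσ : HasCompactSupport σ := cφ.mul_left
  have i1 := logmul_int sφ.continuous cφ
  have i2 := sσ.continuous.integrable_of_hasCompactSupport cσ (μ := volume)
  have c1 : HasCompactSupport (fun x : ℝ => (Real.log x : ℂ) * φ x) := cφ.mul_left
  have ig := i1.add i2
  have cg := c1.add cσ
  refine ⟨EE ((fun x : ℝ => (Real.log x : ℂ) * φ x) + σ), fun ζ => (EE_deriv ig cg ζ).differentiableAt, fun ζ => ?_, ?_⟩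
  · have := integral_image_eq_integral_abs_deriv_smul (s := Set.univ) (f := Real.exp) (f' := Real.exp)
      MeasurableSet.univ (fun x _ => (Real.hasDerivAt_exp x).hasDerivWithinAt) Real.exp_injective.injOn
      (fun t : ℝ => (t : ℂ) ^ (ζ - 1) * (Real.log |(1 + t) / (1 - t)| : ℂ) * τ t)
    rw [Set.image_univ, Real.range_exp] at this
    rw [this, setIntegral_univ]
    unfold EE
    apply integral_congr_ae
    have h0 : ∀ᵐ x : ℝ, x ≠ 0 := by simp [ae_iff]
    filter_upwards [h0] with x hx
    rw [W_eq x hx]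
    have hp : ((Real.exp x : ℝ) : ℂ) ^ (ζ - 1) = Complex.exp (ζ * x) * Complex.exp (-x) := by
      rw [Complex.cpow_def_of_ne_zero (by exact_mod_cast (Real.exp_pos x).ne'), ← Complex.ofReal_log (Real.exp_pos x).le,
        Real.log_exp, ← Complex.exp_add]
      congr 1; ring
    rw [hp, abs_of_pos (Real.exp_pos x), Complex.real_smul]
    have he : ((Real.exp x : ℝ) : ℂ) * Complex.exp (-x) = 1 := by
      rw [Complex.ofReal_exp, ← Complex.exp_add]; simp
    have : v x = Real.log (1 + Real.exp x) - Real.log (dslope Real.exp 0 x) := rfl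
    rw [← this]
    simp only [Pi.add_apply, hσ, hφ]
    push_cast at he ⊢
    linear_combination (-Complex.exp (ζ * x) * (-(Real.log x : ℂ) + v x) * τ (Real.exp x)) * he
  · intro c d hcd l
    obtain ⟨C1, h1⟩ := EE_log (max |c| |d|) l sφ cφ
    have hx : ContDiff ℝ (⊤ : ℕ∞) (fun x : ℝ => (x : ℂ)) := Complex.ofRealCLM.contDiff
    have s3 : ContDiff ℝ (⊤ : ℕ∞) (fun x : ℝ => (x : ℂ) ^ l * σ x) := (hx.pow l).mul sσ
    have c3 : HasCompactSupport (fun x : ℝ => (x : ℂ) ^ l * σ x) := cσ.mul_left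
    obtain ⟨C2, h2⟩ := EE_smooth (max |c| |d|) (l + 1) s3 c3
    refine ⟨C1 + C2, fun ζ hc hd => ?_⟩
    have hζ : |ζ.re| ≤ max |c| |d| := abs_le_max_abs_abs hc hd
    have a1 := h1 ζ hζ
    have a2 := h2 ζ hζ
    rw [EE_iter l ig cg]
    have e : (fun x : ℝ => (x : ℂ) ^ l * ((fun x : ℝ => (Real.log x : ℂ) * φ x) + σ) x) =
      fun x : ℝ => (x : ℂ) ^ l * ((Real.log x : ℂ) * φ x) + (x : ℂ) ^ l * σ x := by
      ext x; simp [mul_add]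
    rw [e, EE_add (mulx_int i1 c1 (u := fun x : ℝ => (x : ℂ) ^ l) (by fun_prop)) c1.mul_left
      (s3.continuous.integrable_of_hasCompactSupport c3) c3]
    have := mul_le_mul_of_nonneg_left (norm_add_le (EE (fun x : ℝ => (x : ℂ) ^ l * ((Real.log x : ℂ) * φ x)) ζ)
      (EE (fun x : ℝ => (x : ℂ) ^ l * σ x) ζ)) (show 0 ≤ (1 + |ζ.im|) ^ (l + 1) by positivity)
    rw [mul_add] at this
    linarith
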